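/- arXiv:cmp-lg/9404001 — 2 statements merged into one kernel-verified Lean document; each statement's English description precedes it below -/
import Mathlib

section
/- Commutation identity for address updates (key identity in the proof of the Proposition): For all addresses s, t, t' : List ℕ with t ≠ t' and all foot addresses fA, fB : List ℕ, update (update s fA t) fB (update t' fA t) = update (update s fB t') fA (update t fB t'). -/
/-- Adjunction of an auxiliary tree `A` with foot address `f` at address `t` in tree `E`. -/
def adjoin {σ : Type*} (E A : List ℕ → Option σ) (t f : List ℕ) : List ℕ → Option σ :=
  fun r =>
    if t <+: r then
      let u := r.drop t.length
      if f <+: u then E (t ++ u.drop f.length) else A u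
    else E r

/-- Address update after adjunction of a tree with foot `f` at address `t`. -/
def update (s f t : List ℕ) : List ℕ :=
  if t <+: s ∧ t ≠ s then t ++ f ++ s.drop t.length else s

/-!
Updates are equivariant under a common prefix: `update (p ++ s) f (p ++ t) = p ++ update s f t`.
If one adjunction site lies below the other, say `t' = t ++ v`, then for `s = t ++ w` with `w ≠ []`
equivariance brings both composites to `t ++ (fA ++ update w fB v)`, while any other `s` is fixed by
every update involved. If the sites are incomparable, `s` lies below at most one of them, and an
update at one site never changes whether an address lies below the other.
-/

variable {s t u v w f fA fB : List ℕ}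

lemma update_append (hw : w ≠ []) : update (t ++ w) f t = t ++ (f ++ w) := by
  simp [update, hw]

lemma update_of_prefix_of_not_proper (htu : t <+: u) (hs : ¬(t <+: s ∧ t ≠ s)) :
    update s f u = s := by
  refine if_neg fun ⟨hus, hne⟩ ↦ hs ⟨htu.trans hus, ?_⟩
  rintro rfl
  exact hne (antisymm hus htu)

lemma update_of_not_prefix (h : ¬t <+: s) : update s f t = s :=
  update_of_prefix_of_not_proper List.prefix_rfl fun hs ↦ h hs.1

lemma update_append_append (p s f t : List ℕ) :
    update (p ++ s) f (p ++ t) = p ++ update s f t := by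
  simp only [update, List.prefix_append_right_inj, ne_eq, List.append_cancel_left_eq,
    List.length_append, List.drop_length_add_append, List.append_assoc]
  split_ifs <;> rfl

lemma update_ne_nil (hs : s ≠ []) : update s f t ≠ [] := by
  by_cases ht : t <+: s ∧ t ≠ s
  · obtain ⟨⟨w, rfl⟩, hne⟩ := ht
    have hw : w ≠ [] := by simpa using hne
    simp [update_append hw, hw]
  · rwa [update_of_prefix_of_not_proper List.prefix_rfl ht]

lemma prefix_update (h : t <+: s) : t <+: update s f t := by
  unfold update
  split_ifs
  · simp
  · exact h

lemma not_prefix_of_incomparable {α : Type*} {s t u : List α} (htu : ¬t <+: u) (hut : ¬u <+: t)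
    (hts : t <+: s) : ¬u <+: s :=
  fun hus ↦ (List.prefix_or_prefix_of_prefix hts hus).elim htu hut

lemma prefix_update_iff_of_incomparable (htu : ¬t <+: u) (hut : ¬u <+: t) :
    u <+: update s f t ↔ u <+: s := by
  by_cases ht : t <+: s
  · exact iff_of_false (not_prefix_of_incomparable htu hut (prefix_update ht))
      (not_prefix_of_incomparable htu hut ht)
  · rw [update_of_not_prefix ht]

lemma update_update_append :
    update (update s fA t) fB (t ++ (fA ++ v)) = update (update s fB (t ++ v)) fA t := by
  by_cases hs : t <+: s ∧ t ≠ s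
  · obtain ⟨⟨w, rfl⟩, hne⟩ := hs
    have hw : w ≠ [] := by simpa using hne
    calc update (update (t ++ w) fA t) fB (t ++ (fA ++ v))
        = t ++ (fA ++ update w fB v) := by
          rw [update_append hw, update_append_append, update_append_append]
      _ = update (update (t ++ w) fB (t ++ v)) fA t := by
          rw [update_append_append, update_append (update_ne_nil hw)]
  · have fixed {f u : List ℕ} (htu : t <+: u) : update s f u = s :=
      update_of_prefix_of_not_proper htu hs
    simp only [fixed, List.prefix_rfl, List.prefix_append]

lemma update_comm_of_prefix (htu : t <+: u) (hne : t ≠ u) :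
    update (update s fA t) fB (update u fA t) = update (update s fB u) fA (update t fB u) := by
  have hut : ¬u <+: t := fun hut ↦ hne (antisymm htu hut)
  rw [update_of_not_prefix hut]
  obtain ⟨v, rfl⟩ := htu
  have hv : v ≠ [] := by simpa using hne
  rw [update_append hv, update_update_append]

lemma update_right_comm_of_not_prefix (htu : ¬t <+: u) (hut : ¬u <+: t) (hs : ¬u <+: s) :
    update (update s fA t) fB u = update (update s fB u) fA t := by
  have hs' : ¬u <+: update s fA t := (prefix_update_iff_of_incomparable htu hut).not.mpr hs
  rw [update_of_not_prefix hs, update_of_not_prefix hs']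

lemma update_right_comm_of_incomparable (htu : ¬t <+: u) (hut : ¬u <+: t) :
    update (update s fA t) fB u = update (update s fB u) fA t := by
  by_cases hus : u <+: s
  · have hts : ¬t <+: s := not_prefix_of_incomparable hut htu hus
    exact (update_right_comm_of_not_prefix hut htu hts).symm
  · exact update_right_comm_of_not_prefix htu hut hus

/-- Commutation identity for address updates (key identity in the proof of the Proposition). -/
theorem update_comm (s t t' fA fB : List ℕ) (h : t ≠ t') :
    update (update s fA t) fB (update t' fA t)
      = update (update s fB t') fA (update t fB t') := by
  by_cases htt' : t <+: t'
  · exact update_comm_of_prefix htt' h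
  by_cases ht't : t' <+: t
  · exact (update_comm_of_prefix ht't h.symm).symm
  rw [update_of_not_prefix htt', update_of_not_prefix ht't]
  exact update_right_comm_of_incomparable htt' ht't
end

section
/- Equivalence of the two definitions of adjunction under the label-matching condition: Let σ be a type, E, A : List ℕ → Option σ trees, t : List ℕ an address, and fA : List ℕ the foot address of A. If A [] = E t and A fA = E t (the node adjoined at has the same label as the root and the foot of the auxiliary tree), then the modified adjunction satisfies all three clauses of the original definition: (i) for every r : List ℕ that does not have t as a proper prefix, adjoin E A t fA r = E r; (ii) for every u : List ℕ such that fA is not a proper prefix of u, adjoin E A t fA (t ++ u) = A u; and (iii) for every u : List ℕ, adjoin E A t fA (t ++ fA ++ u) = E (t ++ u). -/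
/-
The two definitions can differ only at the addresses `t` and `t ++ fA`, where "prefix" and "proper
prefix" select different clauses. There the competing labels are those of the adjunction node and
of the root or the foot of the auxiliary tree, so matching labels make the definitions agree.
-/

section

variable {σ : Type*} (E A : List ℕ → Option σ) (t f : List ℕ)

theorem adjoin_of_not_prefix {r : List ℕ} (h : ¬ t <+: r) : adjoin E A t f r = E r :=
  if_neg h

theorem adjoin_append (u : List ℕ) :
    adjoin E A t f (t ++ u) = if f <+: u then E (t ++ u.drop f.length) else A u := by
  simp only [adjoin, List.prefix_append, if_true, List.drop_left]

theorem adjoin_append_of_not_prefix {u : List ℕ} (h : ¬ f <+: u) :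
    adjoin E A t f (t ++ u) = A u := by
  rw [adjoin_append, if_neg h]

theorem adjoin_append_foot_append (u : List ℕ) :
    adjoin E A t f (t ++ f ++ u) = E (t ++ u) := by
  rw [List.append_assoc, adjoin_append, if_pos (List.prefix_append f u), List.drop_left]

theorem adjoin_append_foot : adjoin E A t f (t ++ f) = E t := by
  simpa only [List.append_nil] using adjoin_append_foot_append E A t f []

variable {E A t}

theorem adjoin_self (hroot : A [] = E t) : adjoin E A t f t = E t := by
  simpa only [List.append_nil, List.drop_nil, hroot, ite_self] using adjoin_append E A t f []

end

/-- Equivalence of the two definitions of adjunction under the label-matching condition. -/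
theorem adjoin_original_clauses {σ : Type*} (E A : List ℕ → Option σ) (t fA : List ℕ)
    (hroot : A [] = E t) (hfoot : A fA = E t) :
    (∀ r : List ℕ, ¬ (t <+: r ∧ t ≠ r) → adjoin E A t fA r = E r) ∧
    (∀ u : List ℕ, ¬ (fA <+: u ∧ fA ≠ u) → adjoin E A t fA (t ++ u) = A u) ∧
    (∀ u : List ℕ, adjoin E A t fA (t ++ fA ++ u) = E (t ++ u)) := by
  refine ⟨fun r hr => ?_, fun u hu => ?_, adjoin_append_foot_append E A t fA⟩
  · by_cases h : t <+: r
    · obtain rfl : t = r := not_and_not_right.mp hr h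
      exact adjoin_self fA hroot
    · exact adjoin_of_not_prefix E A t fA h
  · by_cases h : fA <+: u
    · obtain rfl : fA = u := not_and_not_right.mp hu h
      rw [adjoin_append_foot, hfoot]
    · exact adjoin_append_of_not_prefix E A t fA h
end
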